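/- Let R be a topological commutative ring admitting a decreasing sequence of open ideals I₀ ⊇ I₁ ⊇ I₂ ⊇ ⋯ that forms a neighborhood basis of 0, such that each quotient ring R/I_n is Noetherian. Then for every closed ideal I of R there exists a sequence (α_n)_{n≥1} of elements of I with α_n → 0 such that I equals the topological closure of the ideal generated by {α₁, α₂, α₃, …}. -/

import Mathlib

theorem exists_finset_lift_gen {R : Type*} [CommRing R] (A K : Ideal R)
    (h : IsNoetherianRing (R ⧸ A)) :
    ∃ t : Finset R, (0 : R) ∈ t ∧ (t : Set R) ⊆ K ∧ K ≤ Ideal.span (t : Set R) ⊔ A := by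
  classical
  have hfg : (Submodule.span (R ⧸ A) (Ideal.Quotient.mk A '' (K : Set R))).FG :=
    IsNoetherian.noetherian _
  rw [Submodule.fg_span_iff_fg_span_finset_subset] at hfg
  obtain ⟨s', hs', hspan⟩ := hfg
  obtain ⟨t, htK, rfl⟩ := Finset.subset_set_image_iff.1 hs'
  refine ⟨insert 0 t, by simp, ?_, ?_⟩
  · intro x hx
    rcases Finset.mem_insert.1 (Finset.mem_coe.1 hx) with rfl | hx
    · exact K.zero_mem
    · exact htK hx
  · intro x hx
    have h1 : Ideal.Quotient.mk A x ∈
        Submodule.span (R ⧸ A) (Ideal.Quotient.mk A '' (K : Set R)) :=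
      Submodule.subset_span ⟨x, hx, rfl⟩
    rw [hspan, Finset.coe_image] at h1
    have h2 : Ideal.Quotient.mk A x ∈ Ideal.map (Ideal.Quotient.mk A) (Ideal.span (t : Set R)) := by
      rw [Ideal.map_span]; exact h1
    have h3 : x ∈ Ideal.comap (Ideal.Quotient.mk A)
        (Ideal.map (Ideal.Quotient.mk A) (Ideal.span (t : Set R))) := h2
    rw [Ideal.comap_map_of_surjective' _ Ideal.Quotient.mk_surjective, Ideal.mk_ker] at h3
    have h4 : Ideal.span (t : Set R) ≤ Ideal.span ((insert 0 t : Finset R) : Set R) :=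
      Ideal.span_mono (by simp)
    exact sup_le_sup_right h4 A h3


/-- Let `R` be a topological commutative ring with a decreasing sequence of open ideals
`I 0 ⊇ I 1 ⊇ ⋯` forming a neighborhood basis of `0`, with each quotient `R ⧸ I n` Noetherian.
Then every closed ideal `J` of `R` is the closure of an ideal generated by a sequence of elements
of `J` tending to `0`. -/
theorem closed_ideal_eq_closure_of_span_of_null_sequence
    {R : Type*} [CommRing R] [TopologicalSpace R] [IsTopologicalRing R]
    (I : ℕ → Ideal R) (hdec : ∀ n, I (n + 1) ≤ I n)
    (hopen : ∀ n, IsOpen (I n : Set R))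
    (hbasis : (nhds (0 : R)).HasBasis (fun _ : ℕ => True) fun n => (I n : Set R))
    (hnoeth : ∀ n, IsNoetherianRing (R ⧸ I n))
    (J : Ideal R) (hJ : IsClosed (J : Set R)) :
    ∃ α : ℕ → R, (∀ n, α n ∈ J) ∧ Filter.Tendsto α Filter.atTop (nhds 0) ∧
      (J : Set R) = closure (Ideal.span (Set.range α) : Set R) := by
  classical
  have hanti : Antitone I := antitone_nat_of_succ_le hdec
  let L : ℕ → Ideal R := fun n => Nat.casesOn n ⊤ I
  choose F hF0 hFK hFs using fun n => exists_finset_lift_gen (I n) (J ⊓ L n) (hnoeth n)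
  let T := Σ n, {x // x ∈ F n}
  have : Infinite T := Infinite.of_injective (fun n : ℕ => (⟨n, ⟨0, hF0 n⟩⟩ : T))
    (fun a b h => congrArg Sigma.fst h)
  obtain ⟨_⟩ := nonempty_denumerable T
  let e : ℕ ≃ T := (Denumerable.eqv T).symm
  let g : T → R := fun x => x.2.1
  have hgJ : ∀ x, g x ∈ J := fun x => (hFK x.1 x.2.2).1
  have hrange : Set.range (g ∘ e) = Set.range g := e.surjective.range_comp g
  have hg : Filter.Tendsto g Filter.cofinite (nhds 0) := by
    rw [hbasis.tendsto_right_iff]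
    intro m _
    rw [Filter.eventually_cofinite]
    have hfin : (⋃ n ∈ Finset.range (m + 1),
        Set.range (fun x : {x // x ∈ F n} => (⟨n, x⟩ : T))).Finite :=
      Set.Finite.biUnion (Finset.finite_toSet _) (fun n _ => Set.finite_range _)
    refine hfin.subset ?_
    rintro ⟨n, x⟩ hx
    simp only [Set.mem_iUnion]
    refine ⟨n, ?_, x, rfl⟩
    by_contra hn
    rw [Finset.mem_range, not_lt] at hn
    obtain ⟨k, rfl⟩ : ∃ k, n = k + 1 := ⟨n - 1, by omega⟩
    exact hx (hanti (by omega : m ≤ k) (hFK (k + 1) x.2).2)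
  have hle : Ideal.span (Set.range g) ≤ J := by
    rw [Ideal.span_le]
    rintro _ ⟨x, rfl⟩
    exact hgJ x
  have key : ∀ n, J ≤ Ideal.span (Set.range g) ⊔ (J ⊓ L n) := by
    intro n
    induction n with
    | zero => exact le_sup_of_le_right (le_inf le_rfl le_top)
    | succ n ih =>
      refine ih.trans (sup_le le_sup_left ?_)
      intro x hx
      obtain ⟨y, hy, z, hz, rfl⟩ := Submodule.mem_sup.1 (hFs n hx)
      have hy' : y ∈ Ideal.span (Set.range g) :=
        Ideal.span_mono (s := (F n : Set R)) (t := Set.range g)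
          (fun w hw => ⟨(⟨n, ⟨w, hw⟩⟩ : T), rfl⟩) hy
      refine Submodule.mem_sup.2 ⟨y, hy', z, ⟨?_, hz⟩, rfl⟩
      exact (Submodule.add_mem_iff_right J (hle hy')).1 hx.1
  refine ⟨g ∘ e, fun n => hgJ _, ?_, ?_⟩
  · rw [← Nat.cofinite_eq_atTop]
    exact hg.comp e.injective.tendsto_cofinite
  · rw [hrange]
    apply Set.Subset.antisymm
    · intro x hx
      rw [mem_closure_iff_nhds]
      intro U hU
      have hU' : (fun z => x - z) ⁻¹' U ∈ nhds (0 : R) := by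
        apply (continuous_const.sub continuous_id).continuousAt.preimage_mem_nhds
        simpa using hU
      obtain ⟨n, -, hn⟩ := hbasis.mem_iff.1 hU'
      obtain ⟨y, hy, z, hz, rfl⟩ := Submodule.mem_sup.1 (key (n + 1) hx)
      refine ⟨y, ?_, hy⟩
      have := hn hz.2
      simpa using this
    · exact closure_minimal hle hJ
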